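/- Extend the hook functions to all integers u by setting S_{(u|v)} := det M for u ∈ ℤ and v ≥ 0, where M is the (v+1)×(v+1) matrix with first row (h^{(j−1)}_{u+1})_{j=1,…,v+1} and i-th row (h^{(j−1)}_{2−i})_{j=1,…,v+1} for 2 ≤ i ≤ v+1. Then for every u < 0: S_{(u|v)} = (−1)^v if u + v = −1, and S_{(u|v)} = 0 if u + v ≠ −1. -/

import Mathlib

open Polynomial Matrix Finset

noncomputable section

variable {K L : Type*} [Field K] [Field L]

/-- The orthogonal-polynomial sequence: `φ₀ = 1`, `φ₁ = z - a 0`,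
`φ_{i+1} = (z - a i)·φ_i - b i·φ_{i-1}` (so `φ_{-1} = 0`). -/
def phi (a b : ℤ → K) : ℕ → Polynomial K
  | 0 => 1
  | 1 => Polynomial.X - Polynomial.C (a 0)
  | (i+2) => (Polynomial.X - Polynomial.C (a (i+1))) * phi a b (i+1)
      - Polynomial.C (b (i+1)) * phi a b i

/-- `φ` with integer index, `0` for negative index. -/
def phiZ (a b : ℤ → K) (m : ℤ) : Polynomial K :=
  if m < 0 then 0 else phi a b m.toNat

/-- Generalized Schur polynomial `S_λ(y₁,…,y_m|a,b)
  = det(φ_{λ_j+m-j}(y_i)) / ∏_{i<j}(y_i - y_j)` (indices here 0-based). -/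
def genS (a b : ℤ → K) (c : K →+* L) {m : ℕ} (y : Fin m → L) (lam : Fin m → ℕ) : L :=
  Matrix.det (Matrix.of fun i j : Fin m =>
      (phi a b (lam j + (m - 1 - (j : ℕ)))).eval₂ c (y i)) /
    ∏ i : Fin m, ∏ j ∈ Finset.Ioi i, (y i - y j)

/-- `h_i = S_{(i)}` for `i ≥ 0`, and `h_i = 0` for `i < 0`. -/
def genh (a b : ℤ → K) (c : K →+* L) {m : ℕ} (y : Fin m → L) (i : ℤ) : L :=
  if i < 0 then 0 else genS a b c y (fun j => if (j : ℕ) = 0 then i.toNat else 0)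

/-- `h_i^{(0)} = h_i`, `h_i^{(r+1)} = h_{i+1}^{(r)} + a(i+m-1)h_i^{(r)} + b(i+m-1)h_{i-1}^{(r)}`. -/
def genhr (a b : ℤ → K) (c : K →+* L) {m : ℕ} (y : Fin m → L) : ℕ → ℤ → L
  | 0, i => genh a b c y i
  | (r+1), i => genhr a b c y r (i+1) + c (a (i + m - 1)) * genhr a b c y r i
      + c (b (i + m - 1)) * genhr a b c y r (i-1)

/-- The field `F = K(x₁,…,x_n)`. -/
abbrev Fn (K : Type*) [Field K] (n : ℕ) := FractionRing (MvPolynomial (Fin n) K)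

/-- The embedding `K → K(x₁,…,x_n)`. -/
def cK (K : Type*) [Field K] (n : ℕ) : K →+* Fn K n :=
  (algebraMap (MvPolynomial (Fin n) K) (Fn K n)).comp MvPolynomial.C

/-- The variables `x₁,…,x_n` as elements of `K(x₁,…,x_n)`. -/
def xv (K : Type*) [Field K] (n : ℕ) (i : Fin n) : Fn K n :=
  algebraMap (MvPolynomial (Fin n) K) (Fn K n) (MvPolynomial.X i)

lemma phi_monic_natDegree (a b : ℤ → K) (i : ℕ) :
    (phi a b i).Monic ∧ (phi a b i).natDegree = i := by
  induction i using Nat.strong_induction_on with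
  | _ i ih =>
    match i with
    | 0 => simp [phi]
    | 1 => exact ⟨monic_X_sub_C _, natDegree_X_sub_C _⟩
    | k + 2 =>
      obtain ⟨hm, hd⟩ := ih (k + 1) (by omega)
      obtain ⟨-, hd'⟩ := ih k (by omega)
      have hM := (monic_X_sub_C (a (k + 1))).mul hm
      have hD : ((X - C (a (k + 1))) * phi a b (k + 1)).natDegree = k + 2 := by
        rw [(monic_X_sub_C _).natDegree_mul hm, natDegree_X_sub_C, hd]
        omega
      have hlt : (C (b (k + 1)) * phi a b k).natDegree <
          ((X - C (a (k + 1))) * phi a b (k + 1)).natDegree := by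
        have := natDegree_C_mul_le (b (k + 1)) (phi a b k)
        omega
      rw [phi]
      refine ⟨hM.sub_of_left (degree_lt_degree hlt), ?_⟩
      rw [natDegree_sub_eq_left_of_natDegree_lt hlt, hD]

/-- The numerator of the generalized Schur polynomial of the empty partition is the
Vandermonde product. -/
lemma det_phi_rev (a b : ℤ → K) (c : K →+* L) {m : ℕ} (y : Fin m → L) :
    Matrix.det (Matrix.of fun i j : Fin m => (phi a b (m - 1 - (j : ℕ))).eval₂ c (y i)) =
      ∏ i : Fin m, ∏ j ∈ Finset.Ioi i, (y i - y j) := by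
  have hV := det_eval_matrixOfPolynomials_eq_det_vandermonde (y ∘ Fin.rev)
    (fun j : Fin m => (phi a b j).map c)
    (fun j => by
      rw [(phi_monic_natDegree a b j).1.natDegree_map, (phi_monic_natDegree a b j).2])
    (fun j => (phi_monic_natDegree a b j).1.map c)
  have hP := det_projVandermonde (fun _ : Fin m => (1 : L)) y
  simp only [one_mul] at hP
  rw [← hP, ← det_submatrix_equiv_self Fin.revPerm,
    ← det_submatrix_equiv_self Fin.revPerm (projVandermonde _ _)]
  trans (vandermonde (y ∘ Fin.rev)).det
  · rw [hV]
    congr 1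
    ext i j
    have : m - 1 - (m - (j + 1 : ℕ)) = (j : ℕ) := by omega
    simp [eval_map, this]
  · congr 1
    ext i j
    simp [projVandermonde_apply, vandermonde_apply]

lemma genh_zero (a b : ℤ → K) (c : K →+* L) {m : ℕ} {y : Fin m → L}
    (hy : Function.Injective y) : genh a b c y 0 = 1 := by
  have hne : ∏ i : Fin m, ∏ j ∈ Finset.Ioi i, (y i - y j) ≠ 0 := by
    refine prod_ne_zero_iff.2 fun i _ => prod_ne_zero_iff.2 fun j hj => ?_
    exact sub_ne_zero.2 (hy.ne (Finset.mem_Ioi.1 hj).ne)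
  simp only [genh, genS, lt_irrefl, if_false, Int.toNat_zero, ite_self, zero_add]
  rw [det_phi_rev, div_self hne]

lemma genhr_of_add_neg (a b : ℤ → K) (c : K →+* L) {m : ℕ} (y : Fin m → L) (r : ℕ) (i : ℤ)
    (h : i + r < 0) : genhr a b c y r i = 0 := by
  induction r generalizing i with
  | zero => simp [genhr, genh, show i < 0 by simpa using h]
  | succ r ih =>
    push_cast at h
    simp [genhr, ih (i + 1) (by omega), ih i (by omega), ih (i - 1) (by omega)]

lemma genhr_of_add_eq_zero (a b : ℤ → K) (c : K →+* L) {m : ℕ} {y : Fin m → L}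
    (hy : Function.Injective y) (r : ℕ) (i : ℤ) (h : i + r = 0) : genhr a b c y r i = 1 := by
  induction r generalizing i with
  | zero =>
    obtain rfl : i = 0 := by simpa using h
    exact genh_zero a b c hy
  | succ r ih =>
    push_cast at h
    simp [genhr, ih (i + 1) (by omega), genhr_of_add_neg a b c y r i (by omega),
      genhr_of_add_neg a b c y r (i - 1) (by omega)]

lemma xv_injective (K : Type*) [Field K] (n : ℕ) : Function.Injective (xv K n) :=
  (IsFractionRing.injective (MvPolynomial (Fin n) K) (Fn K n)).comp
    MvPolynomial.X_injective

/-- Extending the hook functions `S_{(u|v)}` to all integers `u` by the Jacobi–Trudy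
determinant, for `u < 0` one gets `(-1)^v` when `u + v = -1` and `0` otherwise. -/
theorem hook_extension_neg (K : Type*) [Field K] (a b : ℤ → K) (n : ℕ) (hn : 1 ≤ n)
    (u : ℤ) (hu : u < 0) (v : ℕ) :
    Matrix.det (Matrix.of fun i j : Fin (v + 1) =>
        genhr a b (cK K n) (xv K n) (j : ℕ)
          (if (i : ℕ) = 0 then u + 1 else 1 - (i : ℕ)))
      = if u + v = -1 then (-1) ^ v else 0 := by
  rcases lt_trichotomy (u + v) (-1) with h | h | h
  · rw [if_neg h.ne]
    refine det_eq_zero_of_row_eq_zero 0 fun j => ?_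
    have := j.is_lt
    simpa using genhr_of_add_neg a b (cK K n) (xv K n) j (u + 1) (by omega)
  · rw [if_pos h, det_succ_row_zero, Finset.sum_eq_single (Fin.last v)]
    · have h1 : genhr a b (cK K n) (xv K n) v (u + 1) = 1 :=
        genhr_of_add_eq_zero a b _ (xv_injective K n) v (u + 1) (by omega)
      rw [det_of_isUpperTriangular]
      · rw [Finset.prod_eq_one]
        · simp [h1]
        · intro i _
          simpa using genhr_of_add_eq_zero a b (cK K n) (xv_injective K n) i (-i) (by omega)
      · intro i j hij
        have hij' : (j : ℕ) < i := hij
        simpa using genhr_of_add_neg a b (cK K n) (xv K n) j (-i) (by omega)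
    · intro j _ hj
      have hj' : (j : ℕ) < v := Fin.val_lt_last hj
      have h0 := genhr_of_add_neg a b (cK K n) (xv K n) j (u + 1) (by omega)
      simp [h0]
    · simp
  · rw [if_neg h.ne']
    obtain ⟨k, hk⟩ := Int.eq_ofNat_of_zero_le (show 0 ≤ -u by omega)
    have hkv : k < v + 1 := by omega
    refine det_zero_of_row_eq (i := 0) (j := ⟨k, hkv⟩) ?_ ?_
    · simp only [ne_eq, Fin.ext_iff, Fin.val_zero]
      omega
    · have hk0 : k ≠ 0 := by omega
      obtain rfl : u = -k := by omega
      ext j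
      simp [hk0, neg_add_eq_sub]
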